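/- Let L be the centerless twisted N=2 superconformal algebra, V = L ⊗ L the L-module under the adjoint diagonal action, and let d₀ be an even homogeneous super-derivation from L to V of degree 0 with respect to the (1/2)ℤ-grading such that d₀(L_i) = 0 for all i ∈ ℤ. Then d₀(G_r) = 0 for all r ∈ 1/2 + ℤ. -/

import Mathlib

namespace N2

/-- Basis indices of the centerless twisted N=2 superconformal algebra:
`L m` is the Virasoro generator `L_m` (`m ∈ ℤ`),
`T k` is the Heisenberg generator `T_{k+1/2}` (`k ∈ ℤ`, index in `1/2 + ℤ`),
`G n` is the fermionic generator `G_{n/2}` (`n ∈ ℤ`, index in `(1/2)ℤ`). -/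
inductive Idx : Type
  | L : ℤ → Idx
  | T : ℤ → Idx
  | G : ℤ → Idx
  deriving DecidableEq

noncomputable section

/-- The centerless twisted N=2 superconformal algebra `𝓛`, as the free
complex vector space on the basis `{L_m, T_r, G_p}`. -/
abbrev Lsa : Type := Idx →₀ ℂ

/-- `𝓛 ⊗ 𝓛`, realized as the free complex vector space on pairs of basis indices. -/
abbrev V : Type := (Idx × Idx) →₀ ℂ

/-- `𝓛 ⊗ 𝓛 ⊗ 𝓛`. -/
abbrev W : Type := (Idx × Idx × Idx) →₀ ℂ

/-- the basis vector indexed by `i`. -/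
def e (i : Idx) : Lsa := Finsupp.single i 1

/-- the ℤ₂-parity of the basis elements: `L_m, T_r` are even, `G_p` is odd. -/
def par : Idx → ZMod 2
  | .L _ => 0
  | .T _ => 0
  | .G _ => 1

/-- the sign `(-1)^p` for `p ∈ ℤ₂`. -/
def sgn (p : ZMod 2) : ℂ := if p = 0 then 1 else -1

/-- the `(1/2)ℤ`-degree of a basis element, as a rational number:
`L_m ↦ m`, `T_{k+1/2} ↦ k + 1/2`, `G_{n/2} ↦ n/2`. -/
def qdeg : Idx → ℚ
  | .L m => (m : ℚ)
  | .T k => (k : ℚ) + 1/2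
  | .G n => (n : ℚ) / 2

/-- The super-bracket of `𝓛` on basis elements:
`[L_m, L_n] = (m-n) L_{m+n}`, `[L_m, T_r] = -r T_{r+m}`, `[T_r, T_s] = 0`,
`[L_m, G_p] = (m/2 - p) G_{p+m}`, `[T_r, G_p] = G_{p+r}`,
`[G_p, G_q] = (-1)^{2p} 2 L_{p+q}` if `p+q ∈ ℤ` and
`[G_p, G_q] = (-1)^{2p+1} (p-q) T_{p+q}` if `p+q ∈ 1/2+ℤ`,
together with the super skew-symmetric counterparts. -/
def bk : Idx → Idx → Lsa
  | .L m, .L n => ((m : ℂ) - n) • e (.L (m + n))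
  | .L m, .T k => (-((k : ℂ) + 1/2)) • e (.T (k + m))
  | .L m, .G n => (((m : ℂ) - n) / 2) • e (.G (n + 2*m))
  | .T k, .L m => ((k : ℂ) + 1/2) • e (.T (k + m))
  | .T _, .T _ => 0
  | .T k, .G n => e (.G (n + 2*k + 1))
  | .G n, .L m => (-((m : ℂ) - n) / 2) • e (.G (n + 2*m))
  | .G n, .T k => - e (.G (n + 2*k + 1))
  | .G n, .G n' =>
      if (n + n') % 2 = 0 then
        ((-1 : ℂ) ^ n * 2) • e (.L ((n + n') / 2))
      else
        ((-1 : ℂ) ^ (n + 1) * (((n : ℂ) - n') / 2)) • e (.T ((n + n' - 1) / 2))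

/-- the bracket of `𝓛`, extended bilinearly to all of `𝓛`. -/
def br (x y : Lsa) : Lsa :=
  x.sum fun i a => y.sum fun j b => (a * b) • bk i j

/-- the adjoint diagonal action of `𝓛` on `𝓛 ⊗ 𝓛`:
`x ∗ (a ⊗ b) = [x,a] ⊗ b + (-1)^{[x][a]} a ⊗ [x,b]`. -/
def act2 (x : Lsa) (v : V) : V :=
  x.sum fun i a => v.sum fun p c =>
    (a * c) •
      (((bk i p.1).sum fun k t => Finsupp.single (k, p.2) t)
        + sgn (par i * par p.1) • ((bk i p.2).sum fun k t => Finsupp.single (p.1, k) t))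

/-- the adjoint diagonal action of `𝓛` on `𝓛 ⊗ 𝓛 ⊗ 𝓛`. -/
def act3 (x : Lsa) (w : W) : W :=
  x.sum fun i a => w.sum fun p c =>
    (a * c) •
      (((bk i p.1).sum fun k t => Finsupp.single (k, p.2.1, p.2.2) t)
        + sgn (par i * par p.1) •
            ((bk i p.2.1).sum fun k t => Finsupp.single (p.1, k, p.2.2) t)
        + sgn (par i * (par p.1 + par p.2.1)) •
            ((bk i p.2.2).sum fun k t => Finsupp.single (p.1, p.2.1, k) t))

/-- the adjoint diagonal action of `𝓛` on the `n`-fold tensor power `𝓛^{⊗n}`,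
realized as the free complex vector space on `n`-tuples of basis indices:
`x ∗ (a₁ ⊗ ⋯ ⊗ aₙ) = Σ_k (-1)^{[x]([a₁]+⋯+[a_{k-1}])} a₁ ⊗ ⋯ ⊗ [x,a_k] ⊗ ⋯ ⊗ aₙ`. -/
def actN (n : ℕ) (x : Lsa) (v : (Fin n → Idx) →₀ ℂ) : (Fin n → Idx) →₀ ℂ :=
  x.sum fun i a => v.sum fun f c =>
    (a * c) •
      (Finset.univ.sum fun k : Fin n =>
        sgn (par i * ((Finset.univ.filter fun l => l < k).sum fun l => par (f l))) •
          ((bk i (f k)).sum fun j t => Finsupp.single (Function.update f k j) t))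

/-- the super-twist map `τ : 𝓛 ⊗ 𝓛 → 𝓛 ⊗ 𝓛`, `τ(x ⊗ y) = (-1)^{[x][y]} y ⊗ x`. -/
def tau (v : V) : V :=
  v.sum fun p c => (sgn (par p.1 * par p.2) * c) • Finsupp.single (p.2, p.1) 1

/-- the image `Im(1⊗1 - τ) ⊂ 𝓛 ⊗ 𝓛`. -/
def ImOneSubTau : Set V := Set.range fun v : V => v - tau v

/-- the super-cyclic map `ξ` on `𝓛 ⊗ 𝓛 ⊗ 𝓛`:
`ξ(x₁ ⊗ x₂ ⊗ x₃) = (-1)^{[x₁]([x₂]+[x₃])} x₂ ⊗ x₃ ⊗ x₁`. -/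
def xi (w : W) : W :=
  w.sum fun p c =>
    (sgn (par p.1 * (par p.2.1 + par p.2.2)) * c) • Finsupp.single (p.2.1, p.2.2, p.1) 1

/-- `c(r) = [r¹², r¹³] + [r¹², r²³] + [r¹³, r²³] ∈ 𝓛 ⊗ 𝓛 ⊗ 𝓛` for `r ∈ 𝓛 ⊗ 𝓛`. -/
def cYB (r : V) : W :=
  r.sum fun p a => r.sum fun q b =>
    (a * b) •
      (sgn (par q.1 * par p.2) •
          ((bk p.1 q.1).sum fun k t => Finsupp.single (k, p.2, q.2) t)
        + ((bk p.2 q.1).sum fun k t => Finsupp.single (p.1, k, q.2) t)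
        + sgn (par q.1 * par p.2) •
            ((bk p.2 q.2).sum fun k t => Finsupp.single (p.1, q.1, k) t))

/-- `1 ⊗ D : 𝓛 ⊗ 𝓛 → 𝓛 ⊗ 𝓛 ⊗ 𝓛` for an even map `D : 𝓛 → 𝓛 ⊗ 𝓛`. -/
def oneTensorMap (D : Lsa → V) (v : V) : W :=
  v.sum fun p c => c • ((D (e p.2)).sum fun q t => Finsupp.single (p.1, q.1, q.2) t)

/-- `r ∈ 𝓛 ⊗ 𝓛` is homogeneous of parity `ε ∈ ℤ₂`. -/
def IsParityV (ε : ZMod 2) (r : V) : Prop := ∀ p ∈ r.support, par p.1 + par p.2 = ε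

/-- `r ∈ 𝓛 ⊗ 𝓛` is even (degree `0̄`). -/
def IsEvenV (r : V) : Prop := IsParityV 0 r

/-- `r` lies in the graded component `V_ι = Σ_{j+k=ι} 𝓛_j ⊗ 𝓛_k` of `V = 𝓛 ⊗ 𝓛`. -/
def IsDegV (ι : ℚ) (r : V) : Prop := ∀ p ∈ r.support, qdeg p.1 + qdeg p.2 = ι

/-- the linear map `𝓛 → M` with the prescribed values on the basis. -/
def ofBasis {M : Type*} [AddCommMonoid M] [Module ℂ M] (g : Idx → M) : Lsa →ₗ[ℂ] M :=
  Finsupp.lsum ℂ fun i => LinearMap.toSpanSingleton ℂ M (g i)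

/-- the inner super-derivation `a_inn` attached to `a ∈ 𝓛 ⊗ 𝓛` of parity `ε`:
`a_inn(x) = (-1)^{[a][x]} x ∗ a` for homogeneous `x`, extended linearly. -/
def innMap (ε : ZMod 2) (a : V) : Lsa →ₗ[ℂ] V :=
  ofBasis fun i => sgn (ε * par i) • act2 (e i) a

/-- `d : 𝓛 → 𝓛 ⊗ 𝓛` is a super-derivation of parity `ε`:
`d(𝓛_ī) ⊆ V_{ī+ε}` and
`d([x,y]) = (-1)^{[d][x]} x ∗ d(y) - (-1)^{[y]([d]+[x])} y ∗ d(x)`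
for homogeneous `x, y` (stated on basis elements and extended bilinearly). -/
def IsDerOfParity (ε : ZMod 2) (d : Lsa →ₗ[ℂ] V) : Prop :=
  (∀ i : Idx, IsParityV (par i + ε) (d (e i))) ∧
  (∀ i j : Idx,
    d (bk i j)
      = sgn (ε * par i) • act2 (e i) (d (e j))
        - sgn (par j * (ε + par i)) • act2 (e j) (d (e i)))

/-- `d` is homogeneous of degree `ι ∈ (1/2)ℤ` with respect to the `(1/2)ℤ`-grading:
`d(𝓛_j) ⊆ V_{ι+j}`. -/
def IsDegHomogDer (ι : ℚ) (d : Lsa →ₗ[ℂ] V) : Prop :=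
  ∀ i : Idx, IsDegV (ι + qdeg i) (d (e i))

/-- `D : 𝓛 → 𝓛 ⊗ 𝓛` defines a Lie super-bialgebra structure on `𝓛`: it is linear,
`D(𝓛_ī) ⊆ Σ_j 𝓛_j̄ ⊗ 𝓛_{ī-j̄}`, `Im D ⊆ Im(1⊗1-τ)`,
`(1⊗1⊗1 + ξ + ξ²)(1 ⊗ D)D = 0`, and
`D([x,y]) = x ∗ D(y) - (-1)^{[x][y]} y ∗ D(x)`. -/
structure IsLieSuperBialgebraDelta (D : Lsa → V) : Prop where
  linear : IsLinearMap ℂ D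
  parity : ∀ i : Idx, IsParityV (par i) (D (e i))
  skewIm : ∀ x : Lsa, D x ∈ ImOneSubTau
  coJacobi : ∀ x : Lsa,
    oneTensorMap D (D x) + xi (oneTensorMap D (D x)) + xi (xi (oneTensorMap D (D x))) = 0
  cocycle : ∀ i j : Idx,
    D (bk i j) = act2 (e i) (D (e j)) - sgn (par i * par j) • act2 (e j) (D (e i))

open Filter

/-!
A derivation that vanishes on the Virasoro generators commutes with the action of each `L_m`, so it
sends a basis vector, on which `L_{-m} L_m` acts by a scalar, to some `v ∈ V` on which
`L_{-m} L_m` acts by the same scalar. Fix basis vectors `x`, `y` and let `|m|` be large. As `v` has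
finite support, `v` and hence `L_{-m} L_m v` have no component in the line of `L_m x ⊗ L_{-m} y`.
But only the `x ⊗ y` component of `v` contributes to that component of `L_{-m} L_m v`, with a
nonzero factor, so it vanishes.
-/

/-- The degree shift by `m ∈ ℤ` on basis indices: `[L_m, e i]` is a multiple of `e (m +ᵥ i)`. The
index `n` of `G_{n/2}` moves by `2 * m`. -/
instance : AddAction ℤ Idx where
  vadd m
    | .L n => .L (n + m)
    | .T k => .T (k + m)
    | .G n => .G (n + 2 * m)
  zero_vadd i := by cases i <;> simp [HVAdd.hVAdd]
  add_vadd m n i := by cases i <;> simp only [HVAdd.hVAdd] <;> congr 1 <;> ring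

@[simp]
lemma vadd_L (m n : ℤ) : m +ᵥ Idx.L n = .L (n + m) := rfl

@[simp]
lemma vadd_T (m k : ℤ) : m +ᵥ Idx.T k = .T (k + m) := rfl

@[simp]
lemma vadd_G (m n : ℤ) : m +ᵥ Idx.G n = .G (n + 2 * m) := rfl

lemma vadd_idx_injective (i : Idx) : Function.Injective fun m : ℤ => m +ᵥ i := by
  intro m n h
  cases i <;> simpa using h

/-- The structure constant of the adjoint action of `L_m`: the scalar `c` in
`[L_m, e i] = c • e (m +ᵥ i)`. -/
def adCoeff (m : ℤ) : Idx → ℂ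
  | .L n => m - n
  | .T k => -(k + 1 / 2)
  | .G n => (m - n) / 2

lemma bk_L_left (m : ℤ) (i : Idx) : bk (.L m) i = adCoeff m i • e (m +ᵥ i) := by
  cases i <;> simp [bk, adCoeff, add_comm]

lemma eventually_adCoeff_ne_zero (i : Idx) : ∀ᶠ m in cofinite, adCoeff m i ≠ 0 := by
  rcases i with n | k | n
  · filter_upwards [eventually_cofinite_ne n] with m hm
    simpa [adCoeff, sub_eq_zero] using hm
  · have hk : ((2 * k + 1 : ℤ) : ℂ) ≠ 0 := by
      rw [Int.cast_ne_zero]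
      lia
    refine .of_forall fun m h => hk ?_
    rw [adCoeff] at h
    push_cast
    linear_combination -2 * h
  · filter_upwards [eventually_cofinite_ne n] with m hm
    simpa [adCoeff, sub_eq_zero] using hm

lemma act2_zero (x : Lsa) : act2 x 0 = 0 := by
  simp [act2]

lemma act2_smul (x : Lsa) (c : ℂ) (v : V) : act2 x (c • v) = c • act2 x v := by
  simp only [act2, Finsupp.smul_sum, smul_smul, mul_left_comm c]
  refine Finsupp.sum_congr fun i _ => Finsupp.sum_smul_index fun p => ?_
  simp

lemma act2_L (m : ℤ) (v : V) :
    act2 (e (.L m)) v = v.sum fun p c =>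
      Finsupp.single (m +ᵥ p.1, p.2) (adCoeff m p.1 * c)
        + Finsupp.single (p.1, m +ᵥ p.2) (adCoeff m p.2 * c) := by
  rw [act2, e, Finsupp.sum_single_index (by simp)]
  simp [bk_L_left, e, par, sgn, mul_comm]

lemma act2_L_apply (m : ℤ) (v : V) (x y : Idx) :
    act2 (e (.L m)) v (x, y) =
      adCoeff m (-m +ᵥ x) * v (-m +ᵥ x, y) + adCoeff m (-m +ᵥ y) * v (x, -m +ᵥ y) := by
  rw [act2_L]
  induction v using Finsupp.induction_linear with
  | zero => simp
  | add f g hf hg =>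
    rw [Finsupp.sum_add_index' (by simp) (by intros; simp only [mul_add, Finsupp.single_add]; abel),
      Finsupp.add_apply, hf, hg, Finsupp.add_apply, Finsupp.add_apply]
    ring
  | single p c =>
    obtain ⟨a, b⟩ := p
    rw [Finsupp.sum_single_index (by simp)]
    simp only [Finsupp.add_apply, Finsupp.single_apply, Prod.mk.injEq, ← eq_neg_vadd_iff]
    congr 1 <;> split_ifs with h <;> simp [h]

lemma eventually_apply_vadd_neg_vadd_eq_zero (v : V) (x y : Idx) :
    ∀ᶠ m : ℤ in cofinite, v (m +ᵥ x, -m +ᵥ y) = 0 := by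
  have hinj : Function.Injective fun m : ℤ => (m +ᵥ x, -m +ᵥ y) := fun m n h =>
    vadd_idx_injective x (congrArg Prod.fst h)
  have hsupp := v.support.finite_toSet.eventually_cofinite_notMem
  filter_upwards [hinj.tendsto_cofinite.eventually hsupp] with m hm
  simpa using hm

lemma eventually_act2_L_neg_act2_L_apply (v : V) (x y : Idx) :
    ∀ᶠ m : ℤ in cofinite,
      act2 (e (.L (-m))) (act2 (e (.L m)) v) (m +ᵥ x, -m +ᵥ y) =
        adCoeff (-m) y * (adCoeff m x * v (x, y)) := by
  have hfar := eventually_apply_vadd_neg_vadd_eq_zero v x y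
  have hdouble : Function.Injective fun m : ℤ => m + m := fun m n h => by grind
  filter_upwards [hfar, hdouble.tendsto_cofinite.eventually hfar] with m hm hmm
  rw [neg_add, add_vadd, add_vadd] at hmm
  simp [act2_L_apply, hm, hmm]

lemma eq_zero_of_act2_L_neg_act2_L_eq_smul {v : V}
    (hv : ∃ᶠ m : ℤ in cofinite, ∃ c : ℂ, act2 (e (.L (-m))) (act2 (e (.L m)) v) = c • v) :
    v = 0 := by
  ext ⟨x, y⟩
  have hneg := (neg_injective (G := ℤ)).tendsto_cofinite.eventually (eventually_adCoeff_ne_zero y)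
  obtain ⟨m, ⟨c, hc⟩, hcomp, hfar, hx, hy⟩ :=
    (hv.and_eventually <| (eventually_act2_L_neg_act2_L_apply v x y).and <|
      (eventually_apply_vadd_neg_vadd_eq_zero v x y).and <|
      (eventually_adCoeff_ne_zero x).and hneg).exists
  rw [hc, Finsupp.smul_apply, hfar, smul_zero] at hcomp
  simpa [hx, hy] using hcomp.symm

lemma eq_zero_of_map_bk_L {d : Lsa →ₗ[ℂ] V}
    (hd : ∀ (m : ℤ) (i : Idx), d (bk (.L m) i) = act2 (e (.L m)) (d (e i))) : d = 0 := by
  refine Finsupp.lhom_ext' fun i => LinearMap.ext_ring ?_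
  refine eq_zero_of_act2_L_neg_act2_L_eq_smul (v := d (e i)) <| .of_forall fun m =>
    ⟨adCoeff m i * adCoeff (-m) (m +ᵥ i), ?_⟩
  rw [← hd, bk_L_left, map_smul, act2_smul, ← hd, bk_L_left, map_smul, smul_smul, neg_vadd_vadd]

lemma IsDerOfParity.map_bk_L {ε : ZMod 2} {d : Lsa →ₗ[ℂ] V} (hd : IsDerOfParity ε d)
    (hL : ∀ m : ℤ, d (e (.L m)) = 0) (m : ℤ) (i : Idx) :
    d (bk (.L m) i) = act2 (e (.L m)) (d (e i)) := by
  rw [hd.2, hL, act2_zero]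
  simp [par, sgn]

theorem even_deg_zero_der_kills_half_integer_G_general {ε : ZMod 2} {d : Lsa →ₗ[ℂ] V}
    (hd : IsDerOfParity ε d) (hL : ∀ m : ℤ, d (e (.L m)) = 0) : d = 0 :=
  eq_zero_of_map_bk_L (hd.map_bk_L hL)

/-- If an even homogeneous super-derivation `d₀ : 𝓛 → V = 𝓛 ⊗ 𝓛` of degree `0`
kills all `L_i` (`i ∈ ℤ`), then it kills all `G_r` with `r ∈ 1/2 + ℤ`
(half-integer `r = k + 1/2` encoded by the odd integer `2k + 1`). -/
theorem even_deg_zero_der_kills_half_integer_G (d : Lsa →ₗ[ℂ] V)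
    (hd : IsDerOfParity 0 d) (hhom : IsDegHomogDer 0 d)
    (hL : ∀ m : ℤ, d (e (Idx.L m)) = 0) :
    ∀ k : ℤ, d (e (Idx.G (2 * k + 1))) = 0 := by
  intro k
  rw [even_deg_zero_der_kills_half_integer_G_general hd hL, LinearMap.zero_apply]

end
end N2
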